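/- Let q > 1 be a real number, λ a real number, and j ≤ φ natural numbers. Then Σ_{i=0}^{j} [j; i] (−1)^i q^{i(i−1)} γ(λ−2i, φ) = γ(2φ, j) · γ(λ−2j, φ−j) · q^{j(λ−2j)}. -/

import Mathlib

/-- The skew-q-nary Gaussian coefficient `[x;k]` for real `x`. -/
noncomputable def gaussQ (q x : ℝ) (k : ℕ) : ℝ :=
  ∏ i ∈ Finset.range k, (q ^ (2 * x) - q ^ (2 * (i : ℝ))) / (q ^ (2 * (k : ℝ)) - q ^ (2 * (i : ℝ)))

/-- The skew-q-nary Gamma function `γ(x,k)`. -/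
noncomputable def skewGamma (q x : ℝ) (k : ℕ) : ℝ :=
  ∏ i ∈ Finset.range k, (q ^ x - q ^ (2 * (i : ℝ)))

/-!
Put `b = q ^ 2`. By the `q`-Pascal rule, the alternating sum of order `n + 1` of a function `f`
is the one of order `n` of the `q`-difference `f (b x) - f x`, with a factor `b ^ i` in its `i`-th
term. For `f x = (x - 1) (x - b) ⋯ (x - b ^ m)` this difference is `x (b ^ (m + 1) - 1)` times the
same product without its last factor. At `x = y b ^ (n - i)` the factor `b ^ i` turns `x` into
`y b ^ n`, which does not depend on `i` and can be taken out of the sum, so that induction on `n`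
applies.
-/

open Finset

section QChoose

variable {R : Type*}

/-- The Gaussian binomial coefficient with base `b`. It is defined by the `q`-Pascal rule rather
than as a quotient, so that it makes sense in every semiring, also when `b` is a root of unity. -/
def qChoose [Semiring R] (b : R) : ℕ → ℕ → R
  | _, 0 => 1
  | 0, _ + 1 => 0
  | n + 1, k + 1 => qChoose b n k + b ^ (k + 1) * qChoose b n (k + 1)

section Semiring

variable [Semiring R] (b : R)

theorem qChoose_zero_right (n : ℕ) : qChoose b n 0 = 1 := by
  cases n <;> rfl

theorem qChoose_zero_succ (k : ℕ) : qChoose b 0 (k + 1) = 0 := rfl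

theorem qChoose_succ_succ (n k : ℕ) :
    qChoose b (n + 1) (k + 1) = qChoose b n k + b ^ (k + 1) * qChoose b n (k + 1) := rfl

theorem qChoose_eq_zero_of_lt {n k : ℕ} (h : n < k) : qChoose b n k = 0 := by
  induction n generalizing k with
  | zero =>
    obtain ⟨k, rfl⟩ := Nat.exists_eq_succ_of_ne_zero h.ne'
    exact qChoose_zero_succ b k
  | succ n ih =>
    obtain ⟨k, rfl⟩ := Nat.exists_eq_succ_of_ne_zero (Nat.ne_zero_of_lt h)
    rw [qChoose_succ_succ, ih (by lia), ih (by lia), mul_zero, add_zero]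

theorem sum_antidiagonal_qChoose_succ_mul (f : ℕ → ℕ → R) (n : ℕ) :
    ∑ ij ∈ antidiagonal (n + 1), qChoose b (n + 1) ij.1 * f ij.1 ij.2
      = ∑ ij ∈ antidiagonal n, qChoose b n ij.1 * f (ij.1 + 1) ij.2
        + ∑ ij ∈ antidiagonal n, b ^ ij.1 * qChoose b n ij.1 * f ij.1 (ij.2 + 1) := by
  have hshift :
      f 0 (n + 1)
          + ∑ ij ∈ antidiagonal n, b ^ (ij.1 + 1) * qChoose b n (ij.1 + 1) * f (ij.1 + 1) ij.2
        = ∑ ij ∈ antidiagonal n, b ^ ij.1 * qChoose b n ij.1 * f ij.1 (ij.2 + 1) := by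
    let g : ℕ × ℕ → R := fun ij => b ^ ij.1 * qChoose b n ij.1 * f ij.1 ij.2
    have hg := (Nat.sum_antidiagonal_succ (n := n) (f := g)).symm.trans Nat.sum_antidiagonal_succ'
    simpa [g, qChoose_zero_right, qChoose_eq_zero_of_lt b n.lt_succ_self] using hg
  simp only [Nat.sum_antidiagonal_succ, qChoose_zero_right, qChoose_succ_succ, one_mul, add_mul,
    sum_add_distrib, ← hshift, add_left_comm]

end Semiring

section CommRing

variable [CommRing R] (b : R)

/-- The product `(x - 1) (x - b) ⋯ (x - b ^ (k - 1))`, the `q`-analogue of the falling factorial.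
With `b = q ^ 2` and `x` a real power of `q` it is the paper's `γ`. -/
def prodSubPow (x : R) (k : ℕ) : R :=
  ∏ i ∈ range k, (x - b ^ i)

theorem prodSubPow_zero (x : R) : prodSubPow b x 0 = 1 := rfl

theorem prodSubPow_succ (x : R) (k : ℕ) :
    prodSubPow b x (k + 1) = prodSubPow b x k * (x - b ^ k) :=
  prod_range_succ _ _

theorem prodSubPow_one_succ (k : ℕ) : prodSubPow b 1 (k + 1) = 0 :=
  prod_eq_zero (mem_range.mpr k.succ_pos) (by rw [pow_zero, sub_self])

theorem prodSubPow_mul_succ (x : R) (k : ℕ) :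
    prodSubPow b (b * x) (k + 1) = b ^ k * (b * x - 1) * prodSubPow b x k := by
  induction k with
  | zero => simp [prodSubPow]
  | succ k ih => rw [prodSubPow_succ, ih, prodSubPow_succ]; ring

theorem prodSubPow_mul_sub_prodSubPow (x : R) (k : ℕ) :
    prodSubPow b (b * x) (k + 1) - prodSubPow b x (k + 1)
      = x * (b ^ (k + 1) - 1) * prodSubPow b x k := by
  rw [prodSubPow_mul_succ, prodSubPow_succ]; ring

theorem prodSubPow_pow_self_ne_zero [IsDomain R] {b : R}
    (hb : Function.Injective fun n : ℕ => b ^ n) (k : ℕ) : prodSubPow b (b ^ k) k ≠ 0 :=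
  prod_ne_zero_iff.mpr fun _ hi => sub_ne_zero.mpr (hb.ne (mem_range.mp hi).ne')

theorem qChoose_mul_prodSubPow (n k : ℕ) :
    qChoose b n k * prodSubPow b (b ^ k) k = prodSubPow b (b ^ n) k := by
  induction n generalizing k with
  | zero =>
    cases k with
    | zero => rw [qChoose_zero_right, one_mul]
    | succ k => rw [qChoose_zero_succ, zero_mul, pow_zero, prodSubPow_one_succ]
  | succ n ih =>
    cases k with
    | zero => rw [qChoose_zero_right, one_mul, prodSubPow_zero, prodSubPow_zero]
    | succ k =>
      have hk : prodSubPow b (b ^ (k + 1)) (k + 1)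
          = b ^ k * (b ^ (k + 1) - 1) * prodSubPow b (b ^ k) k := by
        rw [pow_succ', prodSubPow_mul_succ]
      calc qChoose b (n + 1) (k + 1) * prodSubPow b (b ^ (k + 1)) (k + 1)
          = b ^ k * (b ^ (k + 1) - 1) * (qChoose b n k * prodSubPow b (b ^ k) k)
              + b ^ (k + 1) * (qChoose b n (k + 1) * prodSubPow b (b ^ (k + 1)) (k + 1)) := by
            rw [qChoose_succ_succ, add_mul, hk]; ring
        _ = b ^ k * (b ^ (k + 1) - 1) * prodSubPow b (b ^ n) k
              + b ^ (k + 1) * (prodSubPow b (b ^ n) k * (b ^ n - b ^ k)) := by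
            rw [ih, ih, prodSubPow_succ]
        _ = b ^ k * (b * b ^ n - 1) * prodSubPow b (b ^ n) k := by ring
        _ = prodSubPow b (b ^ (n + 1)) (k + 1) := by rw [← prodSubPow_mul_succ, ← pow_succ']

theorem sum_antidiagonal_qChoose_succ_mul_alternating (f : R → R) (n : ℕ) (y : R) :
    ∑ ij ∈ antidiagonal (n + 1),
        qChoose b (n + 1) ij.1 * ((-1) ^ ij.1 * b ^ ij.1.choose 2 * f (y * b ^ ij.2))
      = ∑ ij ∈ antidiagonal n, qChoose b n ij.1 * ((-1) ^ ij.1 * b ^ ij.1.choose 2 *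
          (b ^ ij.1 * (f (b * (y * b ^ ij.2)) - f (y * b ^ ij.2)))) := by
  rw [sum_antidiagonal_qChoose_succ_mul b
    (fun i l => (-1) ^ i * b ^ i.choose 2 * f (y * b ^ l)), ← sum_add_distrib]
  refine sum_congr rfl fun ij _ => ?_
  rw [Nat.choose_succ_succ' ij.1 1, Nat.choose_one_right, pow_succ' b ij.2, mul_left_comm y b]
  ring

-- If `m < n` then `m - n` is truncated to `0`, but the factor `prodSubPow b (b ^ m) n` vanishes.
theorem sum_antidiagonal_qChoose_mul_prodSubPow (n m : ℕ) (y : R) :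
    ∑ ij ∈ antidiagonal n,
        qChoose b n ij.1 * ((-1) ^ ij.1 * b ^ ij.1.choose 2 * prodSubPow b (y * b ^ ij.2) m)
      = prodSubPow b (b ^ m) n * prodSubPow b y (m - n) * y ^ n := by
  induction n generalizing m with
  | zero => simp [qChoose_zero_right, prodSubPow_zero]
  | succ n ih =>
    rw [sum_antidiagonal_qChoose_succ_mul_alternating b (fun x => prodSubPow b x m)]
    cases m with
    | zero => simp [prodSubPow_zero, prodSubPow_one_succ]
    | succ m =>
      have hdiff : ∀ ij ∈ antidiagonal n,
          b ^ ij.1 * (prodSubPow b (b * (y * b ^ ij.2)) (m + 1)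
              - prodSubPow b (y * b ^ ij.2) (m + 1))
            = y * b ^ n * (b ^ (m + 1) - 1) * prodSubPow b (y * b ^ ij.2) m := by
        intro ij hij
        rw [prodSubPow_mul_sub_prodSubPow, ← mem_antidiagonal.mp hij]
        ring
      calc _ = y * b ^ n * (b ^ (m + 1) - 1) * ∑ ij ∈ antidiagonal n, qChoose b n ij.1 *
              ((-1) ^ ij.1 * b ^ ij.1.choose 2 * prodSubPow b (y * b ^ ij.2) m) := by
            rw [mul_sum]
            refine sum_congr rfl fun ij hij => ?_
            rw [hdiff ij hij]
            ring
        _ = b ^ n * (b * b ^ m - 1) * prodSubPow b (b ^ m) n * prodSubPow b y (m - n)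
              * y ^ (n + 1) := by
            rw [ih]; ring
        _ = _ := by rw [← prodSubPow_mul_succ, ← pow_succ', Nat.add_sub_add_right]

end CommRing

end QChoose

section Real

variable {q : ℝ}

theorem rpow_two_mul_natCast (hq : 0 ≤ q) (n : ℕ) : q ^ (2 * (n : ℝ)) = (q ^ 2) ^ n := by
  rw [Real.rpow_mul hq, Real.rpow_natCast, Real.rpow_two]

theorem skewGamma_eq_prodSubPow (hq : 0 ≤ q) (x : ℝ) (k : ℕ) :
    skewGamma q x k = prodSubPow (q ^ 2) (q ^ x) k := by
  simp only [skewGamma, prodSubPow, rpow_two_mul_natCast hq]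

theorem gaussQ_natCast (hq : 0 < q) (hq1 : q ≠ 1) (n k : ℕ) :
    gaussQ q n k = qChoose (q ^ 2) n k := by
  have hinj : Function.Injective fun i : ℕ => (q ^ 2) ^ i :=
    pow_right_injective₀ (pow_pos hq 2) ((pow_eq_one_iff_of_nonneg hq.le two_ne_zero).not.mpr hq1)
  rw [eq_div_of_mul_eq (prodSubPow_pow_self_ne_zero hinj k) (qChoose_mul_prodSubPow (q ^ 2) n k)]
  simp only [gaussQ, prodSubPow, rpow_two_mul_natCast hq.le, prod_div_distrib]

theorem stmt14_general (hq : 0 < q) (hq1 : q ≠ 1) (lam : ℝ) (j φ : ℕ) :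
    (∑ i ∈ range (j + 1),
        gaussQ q (j : ℝ) i * (-1 : ℝ) ^ i * q ^ (i * (i - 1)) * skewGamma q (lam - 2 * (i : ℝ)) φ)
      = skewGamma q (2 * (φ : ℝ)) j * skewGamma q (lam - 2 * (j : ℝ)) (φ - j) *
          q ^ ((j : ℝ) * (lam - 2 * (j : ℝ))) := by
  set y := q ^ (lam - 2 * (j : ℝ)) with hy
  have hshift {i l : ℕ} (hil : i + l = j) : q ^ (lam - 2 * (i : ℝ)) = y * (q ^ 2) ^ l := by
    rw [hy, ← rpow_two_mul_natCast hq.le, ← Real.rpow_add hq, ← hil]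
    push_cast
    ring_nf
  have hchoose (i : ℕ) : q ^ (i * (i - 1)) = (q ^ 2) ^ i.choose 2 := by
    rw [← pow_mul, Nat.choose_two_right, Nat.mul_div_cancel' i.even_mul_pred_self.two_dvd]
  have hlast : q ^ ((j : ℝ) * (lam - 2 * (j : ℝ))) = y ^ j := by
    rw [mul_comm, Real.rpow_mul hq.le, Real.rpow_natCast]
  rw [hlast, skewGamma_eq_prodSubPow hq.le, skewGamma_eq_prodSubPow hq.le,
    rpow_two_mul_natCast hq.le, ← hy, ← sum_antidiagonal_qChoose_mul_prodSubPow,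
    Nat.sum_antidiagonal_eq_sum_range_succ_mk]
  refine sum_congr rfl fun i hi => ?_
  rw [gaussQ_natCast hq hq1, skewGamma_eq_prodSubPow hq.le, hchoose,
    hshift (Nat.add_sub_of_le (Nat.lt_succ_iff.mp (mem_range.mp hi)))]
  ring

end Real

theorem stmt14 (q : ℝ) (hq : 1 < q) (lam : ℝ) (j φ : ℕ) (hj : j ≤ φ) :
    (∑ i ∈ Finset.range (j + 1),
        gaussQ q (j : ℝ) i * (-1 : ℝ) ^ i * q ^ (i * (i - 1)) * skewGamma q (lam - 2 * (i : ℝ)) φ)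
      = skewGamma q (2 * (φ : ℝ)) j * skewGamma q (lam - 2 * (j : ℝ)) (φ - j) *
          q ^ ((j : ℝ) * (lam - 2 * (j : ℝ))) :=
  stmt14_general (one_pos.trans hq) hq.ne' lam j φ
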